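/- arXiv:2404.12907 — 5 statements merged into one kernel-verified Lean document; each statement's English description precedes it below -/
import Mathlib

section
/- For any tournament T, the maximum number of pairwise arc-disjoint directed triangles in T is at most the minimum size of a feedback arc set of T, which in turn is at most 6 times (one plus the maximum number of pairwise arc-disjoint directed triangles in T); i.e., ADT(T) ≤ FAST(T) ≤ 6(ADT(T) + 1). -/
variable {V : Type*}

def IsTournament (E : V → V → Prop) : Prop :=
  (∀ v : V, ¬ E v v) ∧ ∀ u v : V, u ≠ v → (E u v ↔ ¬ E v u)

def Acyclic (E : V → V → Prop) : Prop :=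
  ∀ v : V, ¬ Relation.TransGen E v v

noncomputable def indeg [Fintype V] (E : V → V → Prop) (v : V) : ℕ :=
  Set.ncard {u : V | E u v}

noncomputable def indegOn [Fintype V] (E : V → V → Prop) (X : Set V) (v : V) : ℕ :=
  Set.ncard {u : V | u ∈ X ∧ E u v}

def IsTriangle (E : V → V → Prop) (t : V × V × V) : Prop :=
  E t.1 t.2.1 ∧ E t.2.1 t.2.2 ∧ E t.2.2 t.1

def triArcs (t : V × V × V) : Set (V × V) :=
  {(t.1, t.2.1), (t.2.1, t.2.2), (t.2.2, t.1)}

def IsADTFamily (E : V → V → Prop) (F : Finset (V × V × V)) : Prop :=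
  (∀ t ∈ F, IsTriangle E t) ∧
    ∀ t ∈ F, ∀ s ∈ F, t ≠ s → Disjoint (triArcs t) (triArcs s)

noncomputable def ADT (E : V → V → Prop) : ℕ :=
  sSup {n : ℕ | ∃ F : Finset (V × V × V), IsADTFamily E F ∧ F.card = n}

def IsFAS (E : V → V → Prop) (S : Finset (V × V)) : Prop :=
  Acyclic fun u v => E u v ∧ (u, v) ∉ S

noncomputable def FAST (E : V → V → Prop) : ℕ :=
  sInf {n : ℕ | ∃ S : Finset (V × V), IsFAS E S ∧ S.card = n}

def IsFVS (E : V → V → Prop) (F : Finset V) : Prop :=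
  Acyclic fun a b => E a b ∧ a ∉ F ∧ b ∉ F

noncomputable def FVST [Fintype V] (E : V → V → Prop) : ℕ :=
  sInf {n : ℕ | ∃ F : Finset V, IsFVS E F ∧ F.card = n}

noncomputable def maxdb [Fintype V] (E : V → V → Prop) : ℕ :=
  (Finset.range (Fintype.card V)).sup fun d => Set.ncard {v : V | indeg E v = d}

open Classical in
noncomputable def prefLen [Fintype V] (E : V → V → Prop) : ℕ :=
  if ∀ d < Fintype.card V, Set.ncard {v : V | indeg E v = d} = 1 then Fintype.card V
  else sInf {d : ℕ | d < Fintype.card V ∧ Set.ncard {v : V | indeg E v = d} ≠ 1}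

noncomputable def prefSet [Fintype V] (E : V → V → Prop) : Set V :=
  {v : V | indeg E v < prefLen E}

noncomputable def minIndeg [Fintype V] (E : V → V → Prop) : ℕ :=
  sInf {k : ℕ | ∃ v : V, indeg E v = k}

noncomputable def minIndegOn [Fintype V] (E : V → V → Prop) (X : Set V) : ℕ :=
  sInf {k : ℕ | ∃ v ∈ X, indegOn E X v = k}

def emptyBuckets [Fintype V] (E : V → V → Prop) : Set ℕ :=
  {d : ℕ | d < Fintype.card V ∧ {v : V | indeg E v = d} = ∅}

def backArcs [Fintype V] (E : V → V → Prop) : Set (V × V) :=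
  {p : V × V | E p.1 p.2 ∧ indeg E p.2 ≤ indeg E p.1}

def reverseArc (E : V → V → Prop) (u v : V) : V → V → Prop :=
  fun a b =>
    (¬ ((a, b) = (u, v) ∨ (a, b) = (v, u)) ∧ E a b) ∨
      ((a, b) = (u, v) ∧ E v u) ∨ ((a, b) = (v, u) ∧ E u v)

def affected [Fintype V] (E : V → V → Prop) (u v : V) : Set V :=
  {w : V | indeg E w + 1 = indeg E u ∨ indeg E w = indeg E u ∨ indeg E w = indeg E u + 1 ∨
      indeg E w + 1 = indeg E v ∨ indeg E w = indeg E v ∨ indeg E w = indeg E v + 1}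

def kLong [Fintype V] (E : V → V → Prop) (k : ℕ) (p : V × V) : Prop :=
  (k : ℤ) ≤ |(indeg E p.1 : ℤ) - (indeg E p.2 : ℤ)|

def longAdj [Fintype V] (E : V → V → Prop) (k : ℕ) (a b : V) : Prop :=
  ((a, b) ∈ backArcs E ∧ kLong E k (a, b)) ∨ ((b, a) ∈ backArcs E ∧ kLong E k (b, a))

def heavySet [Fintype V] (E : V → V → Prop) (k : ℕ) : Set V :=
  {v : V | k < Set.ncard {u : V | longAdj E k u v}}

/-
Every feedback arc set meets every triangle, and arc-disjoint triangles are met in different arcs,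
whence `ADT E ≤ FAST E`. Conversely, delete the at most `3 * ADT E` arcs of a maximum family of
arc-disjoint triangles. What remains is triangle-free by maximality, and a triangle-free oriented
graph has a feedback arc set no larger than its number of nonadjacent pairs (Chudnovsky, Seymour,
Sullivan). The nonadjacent pairs are the original ones, of which a tournament has none, and the ends
of deleted arcs; so `FAST E` is at most `3 * ADT E` for the deleted arcs plus `3 * ADT E` for the
pairs they leave nonadjacent.

For the triangle-free bound, count induced directed paths `a → b → c`, that is `a → b → c` without
an arc from `a` to `c`. Summed over all vertices, the paths starting at `v` are as numerous as the
paths with middle vertex `v`, so some `v` starts at most as many as it is the middle of. Rank the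
out-neighbours of `v` above `v`, all other vertices below `v`, and recurse into both sides. The arcs
going down from the upper to the lower side belong to induced paths starting at `v`, and each
induced path with middle vertex `v` gives a nonadjacent pair between the two sides.
-/

section

open Finset

section WeakDuality

variable {E : V → V → Prop} {F : Finset (V × V × V)} {S : Finset (V × V)} {t : V × V × V}

lemma IsFAS.exists_mem_triArcs (hS : IsFAS E S) (ht : IsTriangle E t) :
    ∃ p ∈ S, p ∈ triArcs t := by
  obtain ⟨a, b, c⟩ := t
  obtain ⟨hab, hbc, hca⟩ := ht
  by_contra! hdisj
  have notMem {p : V × V} (hp : p ∈ triArcs (a, b, c)) : p ∉ S := fun hpS ↦ hdisj p hpS hp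
  refine hS a (.tail (.tail (.single (b := b) ⟨hab, notMem ?_⟩) (c := c) ⟨hbc, notMem ?_⟩)
    ⟨hca, notMem ?_⟩) <;> simp [triArcs]

lemma IsADTFamily.card_le_card_of_isFAS (hF : IsADTFamily E F) (hS : IsFAS E S) :
    #F ≤ #S := by
  refine card_le_card_of_forall_subsingleton (fun t p ↦ p ∈ triArcs t)
    (fun t ht ↦ hS.exists_mem_triArcs (hF.1 t ht)) ?_
  rintro p - t ⟨ht, hpt⟩ s ⟨hs, hps⟩
  by_contra hne
  exact Set.disjoint_left.1 (hF.2 t ht s hs hne) hpt hps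

lemma FAST_le_card (hS : IsFAS E S) : FAST E ≤ #S :=
  Nat.sInf_le ⟨S, hS, rfl⟩

lemma IsFAS.exists_card_eq_FAST (hS : IsFAS E S) : ∃ S', IsFAS E S' ∧ #S' = FAST E :=
  Nat.sInf_mem (s := {n | ∃ S', IsFAS E S' ∧ #S' = n}) ⟨_, S, hS, rfl⟩

lemma IsFAS.bddAbove_card_isADTFamily (hS : IsFAS E S) :
    BddAbove {n | ∃ F, IsADTFamily E F ∧ #F = n} :=
  ⟨#S, by rintro _ ⟨F, hF, rfl⟩; exact hF.card_le_card_of_isFAS hS⟩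

lemma IsFAS.card_le_ADT (hS : IsFAS E S) (hF : IsADTFamily E F) : #F ≤ ADT E :=
  le_csSup hS.bddAbove_card_isADTFamily ⟨F, hF, rfl⟩

lemma IsFAS.exists_card_eq_ADT (hS : IsFAS E S) : ∃ F, IsADTFamily E F ∧ #F = ADT E :=
  Nat.sSup_mem (s := {n | ∃ F, IsADTFamily E F ∧ #F = n}) ⟨0, ∅, by simp [IsADTFamily], rfl⟩
    hS.bddAbove_card_isADTFamily

lemma IsFAS.ADT_le_FAST (hS : IsFAS E S) : ADT E ≤ FAST E := by
  obtain ⟨F, hF, hFcard⟩ := hS.exists_card_eq_ADT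
  obtain ⟨S', hS', hScard⟩ := hS.exists_card_eq_FAST
  exact hFcard ▸ hScard ▸ hF.card_le_card_of_isFAS hS'

end WeakDuality

/-- The digraph obtained from `E` by deleting the arcs in `D`. -/
def deleteArcs (E : V → V → Prop) (D : Finset (V × V)) : V → V → Prop :=
  fun u v ↦ E u v ∧ (u, v) ∉ D

instance (E : V → V → Prop) [Std.Asymm E] (D : Finset (V × V)) : Std.Asymm (deleteArcs E D) :=
  ⟨fun u v huv hvu ↦ Std.Asymm.asymm u v huv.1 hvu.1⟩

/-- The nonadjacency graph of a digraph: its edges are the unordered pairs of distinct vertices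
that are joined by no arc in either direction. -/
def nonadjGraph (R : V → V → Prop) : SimpleGraph V :=
  (SimpleGraph.fromRel R)ᶜ

lemma nonadjGraph_adj {R : V → V → Prop} {u v : V} :
    (nonadjGraph R).Adj u v ↔ u ≠ v ∧ ¬ R u v ∧ ¬ R v u := by
  simp only [nonadjGraph, SimpleGraph.compl_adj, SimpleGraph.fromRel_adj]
  tauto

lemma IsTournament.asymm {E : V → V → Prop} (hE : IsTournament E) : Std.Asymm E where
  asymm u v huv := (hE.2 u v (by rintro rfl; exact hE.1 u huv)).1 huv

lemma IsTournament.nonadjGraph_eq_bot {E : V → V → Prop} (hE : IsTournament E) :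
    nonadjGraph E = ⊥ := by
  ext u v
  have := hE.2 u v
  simp only [nonadjGraph_adj, SimpleGraph.bot_adj]
  tauto

lemma isFAS_univ [Fintype V] (E : V → V → Prop) : IsFAS E univ := by
  intro v hv
  obtain ⟨u, huv⟩ := Relation.TransGen.head'_iff.1 hv
  exact huv.1.2 (mem_univ _)

section DeleteArcs

variable {E : V → V → Prop} {D S : Finset (V × V)}

lemma IsFAS.union_of_deleteArcs [DecidableEq V] (hS : IsFAS (deleteArcs E D) S) :
    IsFAS E (S ∪ D) := by
  simpa [IsFAS, deleteArcs, and_assoc, and_comm] using hS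

lemma FAST_le_FAST_deleteArcs_add_card [Finite V] (E : V → V → Prop) (D : Finset (V × V)) :
    FAST E ≤ FAST (deleteArcs E D) + #D := by
  classical
  have := Fintype.ofFinite V
  obtain ⟨S, hS, hScard⟩ := (isFAS_univ (deleteArcs E D)).exists_card_eq_FAST
  calc
    FAST E ≤ #(S ∪ D) := FAST_le_card hS.union_of_deleteArcs
    _ ≤ FAST (deleteArcs E D) + #D := hScard ▸ card_union_le S D

lemma isTriangle_deleteArcs_iff {t : V × V × V} :
    IsTriangle (deleteArcs E D) t ↔ IsTriangle E t ∧ Disjoint (triArcs t) D := by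
  simp only [IsTriangle, deleteArcs, triArcs, Set.disjoint_insert_left,
    Set.disjoint_singleton_left, mem_coe]
  tauto

lemma ncard_edgeSet_nonadjGraph_deleteArcs_le [Finite V] (E : V → V → Prop)
    (D : Finset (V × V)) :
    (nonadjGraph (deleteArcs E D)).edgeSet.ncard ≤ (nonadjGraph E).edgeSet.ncard + #D := by
  let ends : V × V → Sym2 V := fun p ↦ s(p.1, p.2)
  have hsub : (nonadjGraph (deleteArcs E D)).edgeSet ⊆ (nonadjGraph E).edgeSet ∪ ends '' D := by
    intro e
    induction e with
    | h u v =>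
      simp only [SimpleGraph.mem_edgeSet, nonadjGraph_adj, deleteArcs, ends, Set.mem_union,
        Set.mem_image, mem_coe, Prod.exists, Sym2.eq_iff]
      grind
  calc
    (nonadjGraph (deleteArcs E D)).edgeSet.ncard
        ≤ (nonadjGraph E).edgeSet.ncard + (ends '' D).ncard :=
      (Set.ncard_le_ncard hsub).trans (Set.ncard_union_le _ _)
    _ ≤ (nonadjGraph E).edgeSet.ncard + #D := by
      gcongr
      exact (Set.ncard_image_le D.finite_toSet).trans (Set.ncard_coe_finset D).le

end DeleteArcs

section CoveredArcs

variable {E : V → V → Prop} {F : Finset (V × V × V)} {S : Finset (V × V)} {t : V × V × V}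

open Classical in
/-- The arcs lying on some triangle of the family `F`. -/
noncomputable def coveredArcs (F : Finset (V × V × V)) : Finset (V × V) :=
  F.biUnion fun t ↦ {(t.1, t.2.1), (t.2.1, t.2.2), (t.2.2, t.1)}

lemma coe_coveredArcs (F : Finset (V × V × V)) :
    (coveredArcs F : Set (V × V)) = ⋃ t ∈ F, triArcs t := by
  simp [coveredArcs, triArcs]

lemma card_coveredArcs_le (F : Finset (V × V × V)) : #(coveredArcs F) ≤ #F * 3 := by
  classical
  exact card_biUnion_le_card_mul _ _ _ fun _ _ ↦ card_le_three

lemma IsADTFamily.insert [DecidableEq V] (hF : IsADTFamily E F) (ht : IsTriangle E t)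
    (hdisj : ∀ s ∈ F, Disjoint (triArcs t) (triArcs s)) : IsADTFamily E (insert t F) := by
  have hpair : (F : Set (V × V × V)).PairwiseDisjoint triArcs :=
    fun s hs s' hs' hne ↦ hF.2 s hs s' hs' hne
  have hpair' := hpair.insert fun s hs _ ↦ hdisj s hs
  rw [← coe_insert] at hpair'
  exact ⟨(forall_mem_insert ..).2 ⟨ht, hF.1⟩, fun s hs s' hs' hne ↦ hpair' hs hs' hne⟩

lemma IsADTFamily.not_isTriangle_deleteArcs_coveredArcs (hF : IsADTFamily E F)
    (hS : IsFAS E S) (hmax : #F = ADT E) (t : V × V × V) :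
    ¬ IsTriangle (deleteArcs E (coveredArcs F)) t := by
  classical
  intro ht
  obtain ⟨htE, hdisj⟩ := isTriangle_deleteArcs_iff.1 ht
  simp only [coe_coveredArcs, Set.disjoint_iUnion₂_right] at hdisj
  have htF : t ∉ F := fun htF ↦
    Set.disjoint_left.1 (hdisj t htF) (Set.mem_insert ..) (Set.mem_insert ..)
  have hle := hS.card_le_ADT (hF.insert htE hdisj)
  rw [card_insert_of_notMem htF] at hle
  omega

end CoveredArcs

lemma card_interedges_self_add_self_add_two_mul_le (G : SimpleGraph V) [DecidableRel G.Adj]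
    {A B X : Finset V} (hA : A ⊆ X) (hB : B ⊆ X) (hAB : Disjoint A B) :
    #(G.interedges A A) + #(G.interedges B B) + 2 * #(G.interedges B A) ≤
      #(G.interedges X X) := by
  classical
  have hcols (Y : Finset V) : #(G.interedges Y A) + #(G.interedges Y B) ≤ #(G.interedges Y X) := by
    rw [← card_union_of_disjoint (G.interedges_disjoint_right Y hAB)]
    exact card_le_card (union_subset (G.interedges_mono subset_rfl hA)
      (G.interedges_mono subset_rfl hB))
  have hrows : #(G.interedges A X) + #(G.interedges B X) ≤ #(G.interedges X X) := by
    rw [← card_union_of_disjoint (G.interedges_disjoint_left hAB X)]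
    exact card_le_card (union_subset (G.interedges_mono hA subset_rfl)
      (G.interedges_mono hB subset_rfl))
  have hcomm : #(G.interedges A B) = #(G.interedges B A) :=
    have : Std.Symm G.Adj := G.symm
    Rel.card_interedges_comm A B
  have := hcols A
  have := hcols B
  omega

section TriangleFree

variable {R : V → V → Prop}

open Classical in
/-- The arcs inside `X` along which the ranking `f` fails to increase: the feedback arc set
determined by `f`. -/
noncomputable def backwardArcs (R : V → V → Prop) (X : Finset V) (f : V → ℕ) : Finset (V × V) :=
  {p ∈ X ×ˢ X | R p.1 p.2 ∧ f p.2 ≤ f p.1}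

open Classical in
/-- The induced directed paths `v → a → b` in `X` with first vertex `v`, encoded as `(a, b)`;
inducedness only excludes the arc `v → b`. -/
noncomputable def inducedPathsFrom (R : V → V → Prop) (X : Finset V) (v : V) : Finset (V × V) :=
  {p ∈ X ×ˢ X | R v p.1 ∧ R p.1 p.2 ∧ ¬ R v p.2}

open Classical in
/-- The induced directed paths `a → v → b` in `X` with middle vertex `v`, encoded as `(a, b)`;
inducedness only excludes the arc `a → b`. -/
noncomputable def inducedPathsThrough (R : V → V → Prop) (X : Finset V) (v : V) : Finset (V × V) :=
  {p ∈ X ×ˢ X | R p.1 v ∧ R v p.2 ∧ ¬ R p.1 p.2}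

open Classical in
/-- The out-neighbours of `v` in `X`. -/
noncomputable def outNbrs (R : V → V → Prop) (X : Finset V) (v : V) : Finset V :=
  {x ∈ X | R v x}

open Classical in
/-- The vertices of `X` other than `v` that are not out-neighbours of `v`. -/
noncomputable def nonOutNbrs (R : V → V → Prop) (X : Finset V) (v : V) : Finset V :=
  {x ∈ X | x ≠ v ∧ ¬ R v x}

lemma isFAS_backwardArcs_univ [Fintype V] (R : V → V → Prop) (f : V → ℕ) :
    IsFAS R (backwardArcs R univ f) := by
  have hmono : (fun u w ↦ R u w ∧ (u, w) ∉ backwardArcs R univ f) ≤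
      fun u w ↦ f u < f w := by
    rintro u w ⟨huw, hmem⟩
    simpa [backwardArcs, huw] using hmem
  intro v hv
  have hlt : Relation.TransGen (· < ·) (f v) (f v) := Relation.TransGen.lift f hmono v v hv
  rw [Relation.transGen_eq_self] at hlt
  exact lt_irrefl (f v) hlt

lemma sum_card_inducedPathsFrom_eq_sum_card_inducedPathsThrough (R : V → V → Prop)
    (X : Finset V) :
    ∑ v ∈ X, #(inducedPathsFrom R X v) = ∑ v ∈ X, #(inducedPathsThrough R X v) := by
  simp only [inducedPathsFrom, inducedPathsThrough, card_filter, sum_product]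
  exact sum_comm

lemma exists_card_inducedPathsFrom_le_card_inducedPathsThrough (R : V → V → Prop) {X : Finset V}
    (hX : X.Nonempty) : ∃ v ∈ X, #(inducedPathsFrom R X v) ≤ #(inducedPathsThrough R X v) :=
  exists_le_of_sum_le hX (sum_card_inducedPathsFrom_eq_sum_card_inducedPathsThrough R X).le

open Classical in
lemma exists_backwardArcs_subset [Std.Asymm R] (X : Finset V) (v : V) (f g : V → ℕ) :
    ∃ h, backwardArcs R X h ⊆ backwardArcs R (outNbrs R X v) f ∪
      backwardArcs R (nonOutNbrs R X v) g ∪ inducedPathsFrom R X v := by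
  have hasymm : ∀ x y, R x y → ¬ R y x := Std.Asymm.asymm
  have hg {x} (hx : x ∈ X) : g x ≤ X.sup g := le_sup hx
  refine ⟨fun x ↦ if x = v then X.sup g + 1 else if R v x then X.sup g + 2 + f x else g x, ?_⟩
  rintro ⟨x, y⟩ hxy
  simp only [backwardArcs, outNbrs, nonOutNbrs, inducedPathsFrom, mem_union, mem_filter,
    mem_product] at hxy ⊢
  grind

open Classical in
lemma inducedPathsThrough_subset_interedges [Std.Asymm R] (hR : ∀ t, ¬ IsTriangle R t)
    (X : Finset V) (v : V) :
    inducedPathsThrough R X v ⊆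
      (nonadjGraph R).interedges (nonOutNbrs R X v) (outNbrs R X v) := by
  rintro ⟨a, b⟩ hab
  simp only [inducedPathsThrough, mem_filter, mem_product] at hab
  obtain ⟨⟨ha, hb⟩, hav, hvb, hnab⟩ := hab
  have hasymm : ∀ x y, R x y → ¬ R y x := Std.Asymm.asymm
  have hnba : ¬ R b a := fun hba ↦ hR (a, v, b) ⟨hav, hvb, hba⟩
  simp only [SimpleGraph.mk_mem_interedges_iff, nonadjGraph_adj, outNbrs, nonOutNbrs, mem_filter]
  grind

open Classical in
lemma exists_two_mul_card_backwardArcs_le [Std.Asymm R] (hR : ∀ t, ¬ IsTriangle R t)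
    (X : Finset V) :
    ∃ f, 2 * #(backwardArcs R X f) ≤ #((nonadjGraph R).interedges X X) := by
  induction X using Finset.strongInduction with
  | H X ih =>
  obtain rfl | hX := X.eq_empty_or_nonempty
  · exact ⟨0, by simp [backwardArcs]⟩
  obtain ⟨v, hv, hpaths⟩ := exists_card_inducedPathsFrom_le_card_inducedPathsThrough R hX
  have hA : outNbrs R X v ⊂ X := filter_ssubset.2 ⟨v, hv, irrefl v⟩
  have hB : nonOutNbrs R X v ⊂ X := filter_ssubset.2 ⟨v, hv, by simp⟩
  have hAB : Disjoint (outNbrs R X v) (nonOutNbrs R X v) :=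
    disjoint_filter.2 fun _ _ hvx hx ↦ hx.2 hvx
  obtain ⟨f, hf⟩ := ih _ hA
  obtain ⟨g, hg⟩ := ih _ hB
  obtain ⟨h, hh⟩ := exists_backwardArcs_subset (R := R) X v f g
  have hback := (card_le_card hh).trans <|
    (card_union_le _ _).trans (Nat.add_le_add_right (card_union_le _ _) _)
  have hthrough := card_le_card (inducedPathsThrough_subset_interedges hR X v)
  have hnonadj :=
    card_interedges_self_add_self_add_two_mul_le (nonadjGraph R) hA.subset hB.subset hAB
  exact ⟨h, by omega⟩

lemma FAST_le_ncard_edgeSet_nonadjGraph [Finite V] [Std.Asymm R] (hR : ∀ t, ¬ IsTriangle R t) :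
    FAST R ≤ (nonadjGraph R).edgeSet.ncard := by
  classical
  have := Fintype.ofFinite V
  obtain ⟨f, hf⟩ := exists_two_mul_card_backwardArcs_le hR univ
  have hedges : #((nonadjGraph R).interedges univ univ) = 2 * (nonadjGraph R).edgeSet.ncard := by
    rw [← SimpleGraph.coe_edgeFinset, Set.ncard_coe_finset, SimpleGraph.two_mul_card_edgeFinset,
      SimpleGraph.interedges_def, univ_product_univ]
  have hFAST := FAST_le_card (isFAS_backwardArcs_univ R f)
  rw [hedges] at hf
  omega

end TriangleFree

theorem stmt0_general [Finite V] (E : V → V → Prop) [Std.Asymm E] :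
    ADT E ≤ FAST E ∧ FAST E ≤ 6 * ADT E + (nonadjGraph E).edgeSet.ncard := by
  have := Fintype.ofFinite V
  have hFAS := isFAS_univ E
  refine ⟨hFAS.ADT_le_FAST, ?_⟩
  obtain ⟨F, hF, hFcard⟩ := hFAS.exists_card_eq_ADT
  have hfree := hF.not_isTriangle_deleteArcs_coveredArcs hFAS hFcard
  have hcovered := card_coveredArcs_le F
  calc
    FAST E ≤ FAST (deleteArcs E (coveredArcs F)) + #(coveredArcs F) :=
      FAST_le_FAST_deleteArcs_add_card E _
    _ ≤ (nonadjGraph (deleteArcs E (coveredArcs F))).edgeSet.ncard + #(coveredArcs F) := by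
      gcongr
      exact FAST_le_ncard_edgeSet_nonadjGraph hfree
    _ ≤ (nonadjGraph E).edgeSet.ncard + #(coveredArcs F) + #(coveredArcs F) := by
      gcongr
      exact ncard_edgeSet_nonadjGraph_deleteArcs_le E _
    _ ≤ 6 * ADT E + (nonadjGraph E).edgeSet.ncard := by omega

end

/-- ADT(T) ≤ FAST(T) ≤ 6(ADT(T) + 1). -/
theorem stmt0 [Fintype V] (E : V → V → Prop) (hT : IsTournament E) :
    ADT E ≤ FAST E ∧ FAST E ≤ 6 * (ADT E + 1) := by
  have := hT.asymm
  obtain ⟨hADT, hFAST⟩ := stmt0_general E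
  rw [hT.nonadjGraph_eq_bot, SimpleGraph.edgeSet_bot, Set.ncard_empty] at hFAST
  exact ⟨hADT, by omega⟩
end

section
/- Let T be a tournament and let uv ∈ E(T) be a back arc, i.e., d_T(u) ≥ d_T(v). Then there exist vertices forming a directed triangle in T that contains the arc uv. -/
variable {V : Type*}

/-!
If an arc `uv` of a tournament lies on no triangle, then every arc `wu` forces `wv`, so the
in-neighbours of `u` are in-neighbours of `v`; since `u` is a further in-neighbour of `v`, the
in-degree of `v` exceeds that of `u`, and `uv` is not a back arc.
-/

/-- The in-neighbourhood of `v`. Unlike `indeg`, it requires no finiteness of `V`. -/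
def inNeighbors (E : V → V → Prop) (v : V) : Set V :=
  {u : V | E u v}

theorem cast_indeg [Fintype V] (E : V → V → Prop) (v : V) :
    (indeg E v : ℕ∞) = (inNeighbors E v).encard :=
  (Set.toFinite (inNeighbors E v)).cast_ncard_eq

section Tournament

variable {E : V → V → Prop} {u v : V}

theorem IsTournament.asymm_s3 (hT : IsTournament E) (huv : E u v) : ¬ E v u :=
  have hne : u ≠ v := fun h => hT.1 v (h ▸ huv)
  (hT.2 u v hne).1 huv

theorem IsTournament.exists_isTriangle_iff (hT : IsTournament E) (huv : E u v) :
    (∃ w, IsTriangle E (u, v, w)) ↔ ¬ inNeighbors E u ⊆ inNeighbors E v := by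
  rw [Set.not_subset]
  constructor
  · rintro ⟨w, -, hvw, hwu⟩
    exact ⟨w, hwu, hT.asymm_s3 hvw⟩
  · rintro ⟨w, hwu, hwv⟩
    have hne : v ≠ w := by
      rintro rfl
      exact hT.asymm_s3 huv hwu
    exact ⟨w, huv, (hT.2 v w hne).2 hwv, hwu⟩

theorem stmt3_general (hT : IsTournament E) (huv : E u v) (hfin : (inNeighbors E v).Finite)
    (hback : (inNeighbors E v).encard ≤ (inNeighbors E u).encard) :
    ∃ w, IsTriangle E (u, v, w) := by
  rw [hT.exists_isTriangle_iff huv]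
  intro hsub
  have hEq : inNeighbors E u = inNeighbors E v := hfin.eq_of_subset_of_encard_le' hsub hback
  have huu : u ∈ inNeighbors E u := hEq ▸ huv
  exact hT.1 u huu

end Tournament

/-- Every back arc of a tournament lies on a directed triangle. -/
theorem stmt3 [Fintype V] (E : V → V → Prop) (hT : IsTournament E) (u v : V)
    (huv : E u v) (hback : indeg E v ≤ indeg E u) :
    ∃ w : V, IsTriangle E (u, v, w) :=
  stmt3_general hT huv (Set.toFinite _) (by simpa only [← cast_indeg, Nat.cast_le] using hback)
end

section
/- Let T be a non-empty tournament on n vertices with prefix P. Then: (1) every arc of T connecting a vertex of P with a vertex of V(T) \ P is directed from P to V(T) \ P; (2) the subtournament T[P] induced by P contains no back arc; and (3) if P ≠ V(T) then the degree bucket DB_T[|P|] is empty. -/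
variable {V : Type*}

/-!
Since every bucket below the prefix length `p` is a singleton, exactly `d` vertices have in-degree
less than `d` for each `d ≤ p`. It follows, by strong induction on the in-degree of `v`, that the
in-neighbours of a vertex `v` with `indeg E v ≤ p` are exactly the vertices of smaller in-degree:
if `u` is one of those, the induction hypothesis for `u` rules out the arc from `v` to `u`, so `u`
is an in-neighbour, and the two sets have the same size. Because this includes the in-degree `p`
itself, no arc joins two vertices of in-degree `p`, so that bucket has at most one element; unless
the prefix is everything it does not have exactly one, hence it is empty.
-/

/-- Semicomplete digraphs: any two distinct vertices are joined by an arc in at least one direction.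
The prefix structure is established for this class; loops are allowed. -/
def IsSemicomplete (E : V → V → Prop) : Prop :=
  Pairwise fun u v => E u v ∨ E v u

theorem IsTournament.isSemicomplete {E : V → V → Prop} (hT : IsTournament E) :
    IsSemicomplete E := fun u v huv =>
  or_iff_not_imp_right.2 (hT.2 u v huv).2

theorem ncard_setOf_lt_of_ncard_fiber_eq_one {α : Type*} {f : α → ℕ} {k : ℕ}
    (hf : ∀ d < k, {a | f a = d}.ncard = 1) : {a | f a < k}.ncard = k := by
  have hbij : Set.BijOn f {a | f a < k} (Set.Iio k) := by
    refine ⟨fun a ha => ha, fun a ha b _ hab => ?_, fun d hd => ?_⟩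
    · obtain ⟨c, hc⟩ := Set.ncard_eq_one.1 (hf (f a) ha)
      have hac : a = c := hc.subset rfl
      have hbc : b = c := hc.subset hab.symm
      exact hac.trans hbc.symm
    · obtain ⟨a, ha⟩ := Set.nonempty_of_ncard_ne_zero ((hf d hd).trans_ne one_ne_zero)
      exact ⟨a, ha.trans_lt hd, ha⟩
  rw [hbij.ncard_eq, Set.ncard_Iio_nat]

section Prefix

variable [Fintype V] {E : V → V → Prop} {u v : V} {d : ℕ}

theorem ncard_bucket_eq_one_of_lt_prefLen (hd : d < prefLen E) :
    {v | indeg E v = d}.ncard = 1 := by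
  unfold prefLen at hd
  split_ifs at hd with hall
  · exact hall d hd
  · push Not at hall
    obtain ⟨e, he⟩ := hall
    have hcard : d < Fintype.card V := (hd.trans_le (Nat.sInf_le he)).trans he.1
    by_contra hne
    exact Nat.notMem_of_lt_sInf hd ⟨hcard, hne⟩

theorem ncard_bucket_prefLen_ne_one (h : prefLen E ≠ Fintype.card V) :
    {v | indeg E v = prefLen E}.ncard ≠ 1 := by
  unfold prefLen at h ⊢
  split_ifs at h ⊢ with hall
  · exact absurd rfl h
  · push Not at hall
    exact (Nat.sInf_mem hall).2

theorem ncard_indeg_lt (hd : d ≤ prefLen E) : {v | indeg E v < d}.ncard = d :=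
  ncard_setOf_lt_of_ncard_fiber_eq_one fun _ he =>
    ncard_bucket_eq_one_of_lt_prefLen (he.trans_le hd)

theorem ncard_prefSet : (prefSet E).ncard = prefLen E :=
  ncard_indeg_lt le_rfl

theorem prefSet_eq_univ_of_prefLen_eq_card (h : prefLen E = Fintype.card V) :
    prefSet E = Set.univ := by
  rw [Set.eq_univ_iff_ncard, ncard_prefSet, h, Nat.card_eq_fintype_card]

namespace IsSemicomplete

theorem setOf_arc_eq_setOf_indeg_lt (hE : IsSemicomplete E) (hv : indeg E v ≤ prefLen E) :
    {u | E u v} = {u | indeg E u < indeg E v} := by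
  induction hd : indeg E v using Nat.strong_induction_on generalizing v with
  | _ d ih =>
    subst hd
    have harc : {u | indeg E u < indeg E v} ⊆ {u | E u v} := by
      intro u (hu : indeg E u < indeg E v)
      refine (hE (ne_of_apply_ne (indeg E) hu.ne)).resolve_right fun hvu => ?_
      have hlt : indeg E v < indeg E u := (ih _ hu (hu.le.trans hv) rfl).subset hvu
      exact hu.asymm hlt
    exact (Set.eq_of_subset_of_ncard_le harc (ncard_indeg_lt hv).ge).symm

theorem arc_iff_indeg_lt (hE : IsSemicomplete E) (hv : indeg E v ≤ prefLen E) :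
    E u v ↔ indeg E u < indeg E v :=
  Set.ext_iff.1 (hE.setOf_arc_eq_setOf_indeg_lt hv) u

theorem arc_of_mem_prefSet_of_notMem (hE : IsSemicomplete E) (hu : u ∈ prefSet E)
    (hv : v ∉ prefSet E) : E u v := by
  have huv : indeg E u < indeg E v := lt_of_lt_of_le hu (not_lt.1 hv)
  refine (hE (ne_of_mem_of_not_mem hu hv)).resolve_right fun hvu => ?_
  exact huv.asymm ((hE.arc_iff_indeg_lt (le_of_lt hu)).1 hvu)

theorem indegOn_prefSet (hE : IsSemicomplete E) (hv : v ∈ prefSet E) :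
    indegOn E (prefSet E) v = indeg E v := by
  have hmem (u : V) (huv : E u v) : u ∈ prefSet E :=
    ((hE.arc_iff_indeg_lt (le_of_lt hv)).1 huv).trans hv
  exact congrArg Set.ncard (Set.ext fun u => and_iff_right_of_imp (hmem u))

theorem subsingleton_bucket (hE : IsSemicomplete E) (hd : d ≤ prefLen E) :
    {v | indeg E v = d}.Subsingleton := by
  rintro u rfl v (huv : indeg E v = indeg E u)
  by_contra hne
  rcases hE hne with harc | harc
  · exact ((hE.arc_iff_indeg_lt (huv.trans_le hd)).1 harc).ne' huv
  · exact ((hE.arc_iff_indeg_lt hd).1 harc).ne huv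

theorem bucket_prefLen_eq_empty (hE : IsSemicomplete E) (h : prefLen E ≠ Fintype.card V) :
    {v | indeg E v = prefLen E} = ∅ := by
  refine (hE.subsingleton_bucket le_rfl).eq_empty_or_singleton.resolve_right ?_
  rintro ⟨v, hv⟩
  exact ncard_bucket_prefLen_ne_one h (Set.ncard_eq_one.2 ⟨v, hv⟩)

end IsSemicomplete

end Prefix

theorem stmt4_general [Fintype V] (E : V → V → Prop) (hE : IsSemicomplete E) :
    (∀ u v : V, u ∈ prefSet E → v ∉ prefSet E → E u v) ∧
    (∀ u v : V, u ∈ prefSet E → v ∈ prefSet E → E u v →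
      indegOn E (prefSet E) u < indegOn E (prefSet E) v) ∧
    (prefSet E ≠ Set.univ → {v : V | indeg E v = (prefSet E).ncard} = ∅) := by
  refine ⟨fun u v => hE.arc_of_mem_prefSet_of_notMem, fun u v hu hv huv => ?_, fun hP => ?_⟩
  · rw [hE.indegOn_prefSet hu, hE.indegOn_prefSet hv]
    exact (hE.arc_iff_indeg_lt (le_of_lt hv)).1 huv
  · rw [ncard_prefSet]
    exact hE.bucket_prefLen_eq_empty (mt prefSet_eq_univ_of_prefLen_eq_card hP)

/-- For a non-empty tournament with prefix `P`: all arcs between `P` and its complement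
are directed out of `P`; the induced subtournament on `P` has no back arcs; and if
`P ≠ V(T)` then the degree bucket at index `|P|` is empty. -/
theorem stmt4 [Fintype V] [Nonempty V] (E : V → V → Prop) (hT : IsTournament E) :
    (∀ u v : V, u ∈ prefSet E → v ∉ prefSet E → E u v) ∧
    (∀ u v : V, u ∈ prefSet E → v ∈ prefSet E → E u v →
      indegOn E (prefSet E) u < indegOn E (prefSet E) v) ∧
    (prefSet E ≠ Set.univ → {v : V | indeg E v = (prefSet E).ncard} = ∅) :=
  stmt4_general E hT.isSemicomplete
end

section
/- Let T be a tournament, uv ∈ E(T), and let Back be the set of back arcs of T. Let T̄ be T with the arc uv reversed, and Back̄ the set of back arcs of T̄. Then every arc xy in the symmetric difference Back △ Back̄ satisfies one of: (1) x ∈ {u, v} and y ∈ Δdb_T(u,v), or (2) y ∈ {u, v} and x ∈ Δdb_T(u,v), where Δdb_T(u,v) is the union of the degree buckets DB_T[d_T(u)−1], DB_T[d_T(u)], DB_T[d_T(u)+1], DB_T[d_T(v)−1], DB_T[d_T(v)], DB_T[d_T(v)+1] (nonexistent buckets treated as empty). -/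
variable {V : Type*}

/-!
Reversing the arc between `u` and `v` changes no in-degree outside `{u, v}` and changes those of
`u` and `v` by at most one. So if `x ∈ {u, v}` and `y ∉ {u, v}`, a pair `(x, y)` or `(y, x)` can
only enter or leave the set of back arcs when the in-degree of `y` is within one of that of `x`,
that is, when `y` lies in an affected bucket; and `u`, `v` themselves always lie in affected
buckets.
-/

section ReverseArc

variable (E : V → V → Prop) {u v a b : V}

theorem reverseArc_comm (u v : V) : reverseArc E u v = reverseArc E v u := by
  ext a b
  simp only [reverseArc]
  tauto

theorem reverseArc_left_right (u v : V) : reverseArc E u v u v ↔ E v u := by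
  simp only [reverseArc, Prod.mk.injEq]
  grind

theorem reverseArc_right_left (u v : V) : reverseArc E u v v u ↔ E u v := by
  rw [reverseArc_comm, reverseArc_left_right]

theorem reverseArc_iff_of_ne (huv : (a, b) ≠ (u, v)) (hvu : (a, b) ≠ (v, u)) :
    reverseArc E u v a b ↔ E a b := by
  simp only [reverseArc, huv, hvu, or_self, not_false_eq_true, true_and, false_and, or_false]

theorem reverseArc_reverseArc (u v : V) : reverseArc (reverseArc E u v) u v = E := by
  ext a b
  by_cases huv : (a, b) = (u, v)
  · obtain ⟨rfl, rfl⟩ := Prod.mk.inj huv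
    rw [reverseArc_left_right, reverseArc_right_left]
  by_cases hvu : (a, b) = (v, u)
  · obtain ⟨rfl, rfl⟩ := Prod.mk.inj hvu
    rw [reverseArc_right_left, reverseArc_left_right]
  · rw [reverseArc_iff_of_ne _ huv hvu, reverseArc_iff_of_ne _ huv hvu]

theorem reverseArc_iff_of_left_notMem (ha : a ∉ ({u, v} : Set V)) :
    reverseArc E u v a b ↔ E a b := by
  refine reverseArc_iff_of_ne E ?_ ?_ <;> rintro ⟨⟩ <;> simp at ha

theorem reverseArc_iff_of_right_notMem (hb : b ∉ ({u, v} : Set V)) :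
    reverseArc E u v a b ↔ E a b := by
  refine reverseArc_iff_of_ne E ?_ ?_ <;> rintro ⟨⟩ <;> simp at hb

theorem setOf_reverseArc_left_subset_insert (u v : V) :
    {a | reverseArc E u v a u} ⊆ insert v {a | E a u} := by
  intro a ha
  by_cases hav : a = v
  · exact .inl hav
  · refine .inr ((reverseArc_iff_of_ne E ?_ ?_).1 ha) <;> grind

end ReverseArc

section Indegree

variable [Fintype V] (E : V → V → Prop) {u v w : V}

theorem indeg_reverseArc_of_notMem (hw : w ∉ ({u, v} : Set V)) :
    indeg (reverseArc E u v) w = indeg E w := by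
  simp only [indeg, reverseArc_iff_of_right_notMem E hw]

theorem indeg_reverseArc_left_le_add_one (u v : V) :
    indeg (reverseArc E u v) u ≤ indeg E u + 1 :=
  calc
    indeg (reverseArc E u v) u ≤ (insert v {a | E a u}).ncard :=
      Set.ncard_le_ncard (setOf_reverseArc_left_subset_insert E u v)
    _ ≤ indeg E u + 1 := Set.ncard_insert_le _ _

theorem indeg_reverseArc_le_add_one (u v w : V) : indeg (reverseArc E u v) w ≤ indeg E w + 1 := by
  by_cases hw : w ∈ ({u, v} : Set V)
  · rcases hw with rfl | rfl
    · exact indeg_reverseArc_left_le_add_one E w v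
    · rw [reverseArc_comm]
      exact indeg_reverseArc_left_le_add_one E w u
  · exact (indeg_reverseArc_of_notMem E hw).le.trans (Nat.le_succ _)

theorem indeg_le_indeg_reverseArc_add_one (u v w : V) :
    indeg E w ≤ indeg (reverseArc E u v) w + 1 := by
  simpa only [reverseArc_reverseArc] using indeg_reverseArc_le_add_one (reverseArc E u v) u v w

end Indegree

section BackArcs

variable [Fintype V] {E : V → V → Prop} {u v x y : V}

theorem mem_backArcs : (x, y) ∈ backArcs E ↔ E x y ∧ indeg E y ≤ indeg E x :=
  Iff.rfl

theorem mem_affected_of_indeg_near (hx : x ∈ ({u, v} : Set V))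
    (hyx : indeg E y ≤ indeg E x + 1) (hxy : indeg E x ≤ indeg E y + 1) :
    y ∈ affected E u v := by
  simp only [affected, Set.mem_ofPred_eq]
  rcases hx with rfl | rfl <;> omega

theorem mem_affected_of_mem_pair (hx : x ∈ ({u, v} : Set V)) : x ∈ affected E u v :=
  mem_affected_of_indeg_near hx (Nat.le_succ _) (Nat.le_succ _)

theorem mem_backArcs_reverseArc_of_notMem (hx : x ∉ ({u, v} : Set V))
    (hy : y ∉ ({u, v} : Set V)) :
    (x, y) ∈ backArcs (reverseArc E u v) ↔ (x, y) ∈ backArcs E := by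
  simp only [mem_backArcs, reverseArc_iff_of_left_notMem E hx,
    indeg_reverseArc_of_notMem E hx, indeg_reverseArc_of_notMem E hy]

theorem head_mem_affected_of_mem_symmDiff_backArcs (hx : x ∈ ({u, v} : Set V))
    (h : (x, y) ∈ symmDiff (backArcs E) (backArcs (reverseArc E u v))) :
    y ∈ affected E u v := by
  by_cases hy : y ∈ ({u, v} : Set V)
  · exact mem_affected_of_mem_pair hy
  · have hle := indeg_reverseArc_le_add_one E u v x
    have hge := indeg_le_indeg_reverseArc_add_one E u v x
    simp only [Set.mem_symmDiff, mem_backArcs, reverseArc_iff_of_right_notMem E hy,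
      indeg_reverseArc_of_notMem E hy] at h
    have hsep : ¬ (indeg E y ≤ indeg E x ↔ indeg E y ≤ indeg (reverseArc E u v) x) := by tauto
    exact mem_affected_of_indeg_near hx (by omega) (by omega)

theorem tail_mem_affected_of_mem_symmDiff_backArcs (hy : y ∈ ({u, v} : Set V))
    (h : (x, y) ∈ symmDiff (backArcs E) (backArcs (reverseArc E u v))) :
    x ∈ affected E u v := by
  by_cases hx : x ∈ ({u, v} : Set V)
  · exact mem_affected_of_mem_pair hx
  · have hle := indeg_reverseArc_le_add_one E u v y
    have hge := indeg_le_indeg_reverseArc_add_one E u v y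
    simp only [Set.mem_symmDiff, mem_backArcs, reverseArc_iff_of_left_notMem E hx,
      indeg_reverseArc_of_notMem E hx] at h
    have hsep : ¬ (indeg E y ≤ indeg E x ↔ indeg (reverseArc E u v) y ≤ indeg E x) := by tauto
    exact mem_affected_of_indeg_near hy (by omega) (by omega)

end BackArcs

theorem stmt10_general [Fintype V] (E : V → V → Prop) (u v : V) :
    ∀ p ∈ symmDiff (backArcs E) (backArcs (reverseArc E u v)),
      (p.1 ∈ ({u, v} : Set V) ∧ p.2 ∈ affected E u v) ∨
      (p.2 ∈ ({u, v} : Set V) ∧ p.1 ∈ affected E u v) := by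
  rintro ⟨x, y⟩ h
  by_cases hx : x ∈ ({u, v} : Set V)
  · exact .inl ⟨hx, head_mem_affected_of_mem_symmDiff_backArcs hx h⟩
  by_cases hy : y ∈ ({u, v} : Set V)
  · exact .inr ⟨hy, tail_mem_affected_of_mem_symmDiff_backArcs hy h⟩
  · rw [Set.mem_symmDiff, mem_backArcs_reverseArc_of_notMem hx hy] at h
    simp only [and_not_self_iff, or_self] at h

/-- Every arc in the symmetric difference of the back-arc sets before and after
reversing `uv` has one endpoint in `{u, v}` and the other in the affected buckets. -/
theorem stmt10 [Fintype V] (E : V → V → Prop) (hT : IsTournament E) (u v : V)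
    (huv : E u v) :
    ∀ p ∈ symmDiff (backArcs E) (backArcs (reverseArc E u v)),
      (p.1 ∈ ({u, v} : Set V) ∧ p.2 ∈ affected E u v) ∨
      (p.2 ∈ ({u, v} : Set V) ∧ p.1 ∈ affected E u v) :=
  stmt10_general E u v
end

section
/- For every tournament T, the maximum size of a degree bucket satisfies maxdb(T) ≤ 2·FVST(T) + 1, where FVST(T) is the minimum size of a feedback vertex set of T. -/
variable {V : Type*}

/-!
Let `F` be a feedback vertex set. A semicomplete digraph (any two distinct vertices are joined by an
arc in at least one direction: `Std.Trichotomous`) is transitive on the acyclic complement of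
`F`, so the in-degrees counted within that complement are pairwise distinct there. Each of them
differs from the full in-degree by at most `|F|`, so at most `|F| + 1` vertices outside `F` share a
given in-degree; the vertices of `F` contribute at most `|F|` more.
-/

theorem IsTournament.trichotomous {E : V → V → Prop} (hT : IsTournament E) :
    Std.Trichotomous E :=
  ⟨fun u v huv hvu => by_contra fun hne => huv ((hT.2 u v hne).2 hvu)⟩

section InDegree

variable [Fintype V] (E : V → V → Prop) (X : Set V) (v : V)

theorem indegOn_le_indeg : indegOn E X v ≤ indeg E v :=
  Set.ncard_le_ncard fun _ hu => hu.2

theorem indeg_le_indegOn_add_ncard_compl : indeg E v ≤ indegOn E X v + Xᶜ.ncard := by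
  have hcover : {u | E u v} ⊆ {u | u ∈ X ∧ E u v} ∪ Xᶜ := fun u huv =>
    (em (u ∈ X)).imp_left fun hu => ⟨hu, huv⟩
  exact (Set.ncard_le_ncard hcover).trans (Set.ncard_union_le _ _)

end InDegree

namespace IsFVS

variable {E : V → V → Prop} {F : Finset V}

theorem irrefl (hF : IsFVS E F) {a : V} (ha : a ∉ F) : ¬ E a a := fun haa =>
  hF a (.single ⟨haa, ha, ha⟩)

theorem trans [Std.Trichotomous E] (hF : IsFVS E F) {a b c : V} (ha : a ∉ F) (hb : b ∉ F)
    (hc : c ∉ F) (hab : E a b) (hbc : E b c) : E a c := by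
  by_contra hac
  have hpath : Relation.TransGen (fun a b => E a b ∧ a ∉ F ∧ b ∉ F) a c :=
    .tail (.single ⟨hab, ha, hb⟩) ⟨hbc, hb, hc⟩
  have hca : ¬ E c a := fun hca => hF a (hpath.tail ⟨hca, hc, ha⟩)
  obtain rfl : a = c := Std.Trichotomous.trichotomous a c hac hca
  exact hF a hpath

variable [Fintype V]

theorem indegOn_compl_lt [Std.Trichotomous E] (hF : IsFVS E F) {u v : V} (hu : u ∉ F)
    (hv : v ∉ F) (huv : E u v) : indegOn E (F : Set V)ᶜ u < indegOn E (F : Set V)ᶜ v := by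
  refine Set.ncard_lt_ncard ((Set.ssubset_iff_of_subset ?_).2 ⟨u, ⟨hu, huv⟩, ?_⟩)
  · exact fun w ⟨hw, hwu⟩ => ⟨hw, hF.trans hw hu hv hwu huv⟩
  · exact fun huu => hF.irrefl hu huu.2

theorem injOn_indegOn_compl [Std.Trichotomous E] (hF : IsFVS E F) :
    Set.InjOn (indegOn E (F : Set V)ᶜ) (F : Set V)ᶜ := fun u hu v hv heq =>
  Std.Trichotomous.trichotomous (r := E) u v
    (fun huv => (hF.indegOn_compl_lt hu hv huv).ne heq)
    (fun hvu => (hF.indegOn_compl_lt hv hu hvu).ne heq.symm)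

theorem ncard_indeg_eq_sdiff_le [Std.Trichotomous E] (hF : IsFVS E F) (d : ℕ) :
    ({v | indeg E v = d} \ (F : Set V)).ncard ≤ F.card + 1 := by
  have hmaps : ∀ v ∈ {v | indeg E v = d} \ (F : Set V),
      indegOn E (F : Set V)ᶜ v ∈ Set.Icc (d - F.card) d := by
    rintro v ⟨rfl, -⟩
    have hlower := indeg_le_indegOn_add_ncard_compl E (F : Set V)ᶜ v
    rw [compl_compl, Set.ncard_coe_finset] at hlower
    exact ⟨Nat.sub_le_of_le_add hlower, indegOn_le_indeg E _ v⟩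
  calc ({v | indeg E v = d} \ (F : Set V)).ncard
      ≤ (Set.Icc (d - F.card) d).ncard :=
        Set.ncard_le_ncard_of_injOn _ hmaps (hF.injOn_indegOn_compl.mono fun _ hv => hv.2)
    _ = d + 1 - (d - F.card) := by
        rw [← Finset.coe_Icc, Set.ncard_coe_finset, Nat.card_Icc]
    _ ≤ F.card + 1 := by omega

theorem ncard_indeg_eq_le [Std.Trichotomous E] (hF : IsFVS E F) (d : ℕ) :
    {v | indeg E v = d}.ncard ≤ 2 * F.card + 1 := by
  have hsplit := Set.ncard_le_ncard_sdiff_add_ncard {v | indeg E v = d} (F : Set V)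
  rw [Set.ncard_coe_finset] at hsplit
  linarith [hF.ncard_indeg_eq_sdiff_le d]

end IsFVS

theorem isFVS_univ [Fintype V] (E : V → V → Prop) : IsFVS E Finset.univ := fun _ hcycle =>
  let ⟨_, hstep, _⟩ := Relation.TransGen.head'_iff.1 hcycle
  hstep.2.1 (Finset.mem_univ _)

theorem exists_isFVS_card_eq_FVST [Fintype V] (E : V → V → Prop) :
    ∃ F : Finset V, IsFVS E F ∧ F.card = FVST E :=
  Nat.sInf_mem (s := {n | ∃ F : Finset V, IsFVS E F ∧ F.card = n}) ⟨_, _, isFVS_univ E, rfl⟩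

theorem stmt14_general [Fintype V] (E : V → V → Prop) [Std.Trichotomous E] :
    maxdb E ≤ 2 * FVST E + 1 := by
  obtain ⟨F, hF, hcard⟩ := exists_isFVS_card_eq_FVST E
  rw [← hcard]
  exact Finset.sup_le fun d _ => hF.ncard_indeg_eq_le d

/-- maxdb(T) ≤ 2·FVST(T) + 1. -/
theorem stmt14 [Fintype V] (E : V → V → Prop) (hT : IsTournament E) :
    maxdb E ≤ 2 * FVST E + 1 :=
  haveI := hT.trichotomous
  stmt14_general E
end
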